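/- If π is a permutation in the Lévy group 𝒢 and μ is a density measure, then μ(πA) = μ(A) for every set A ⊆ ℕ. -/

import Mathlib

open Filter Topology

/-- The counting function `A(n) = |A ∩ [1, n]|`, as a real number. -/
noncomputable def count (A : Set ℕ) (n : ℕ) : ℝ :=
  ((A ∩ Set.Icc 1 n).ncard : ℝ)

/-- `A ⊆ ℕ` has asymptotic density `a`, i.e. `A(n)/n → a`. -/
def HasDensity (A : Set ℕ) (a : ℝ) : Prop :=
  Filter.Tendsto (fun n : ℕ => count A n / n) Filter.atTop (nhds a)

/-- Membership of a permutation `π` of `ℕ` in the Lévy group `𝒢`: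
`|{k : k ≤ n < π(k)}| / n → 0`. -/
def InLevyGroup (π : Equiv.Perm ℕ) : Prop :=
  Filter.Tendsto
    (fun n : ℕ => (({k : ℕ | k ≤ n ∧ n < π k}.ncard : ℝ) / n))
    Filter.atTop (nhds 0)

/-- A finitely additive probability measure defined on all subsets of `ℕ`,
with values in `[0, 1]`. -/
def IsFAMeasure (μ : Set ℕ → ℝ) : Prop :=
  (∀ A : Set ℕ, 0 ≤ μ A) ∧ (∀ A : Set ℕ, μ A ≤ 1) ∧ μ Set.univ = 1 ∧
    ∀ A B : Set ℕ, Disjoint A B → μ (A ∪ B) = μ A + μ B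

/-- A density measure: a finitely additive measure extending asymptotic density. -/
def IsDensityMeasure (μ : Set ℕ → ℝ) : Prop :=
  IsFAMeasure μ ∧ ∀ (A : Set ℕ) (a : ℝ), HasDensity A a → μ A = a

/-- Statistical convergence of a real sequence `x` to `L`: for every `ε > 0`
the set `{n : |x n − L| ≥ ε}` has asymptotic density zero. -/
def StatTendsto (x : ℕ → ℝ) (L : ℝ) : Prop :=
  ∀ ε : ℝ, 0 < ε → HasDensity {n : ℕ | ε ≤ |x n - L|} 0

/-- The limit of a (bounded) real sequence along an ultrafilter on `ℕ`. -/
noncomputable def ulim (𝒰 : Ultrafilter ℕ) (x : ℕ → ℝ) : ℝ :=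
  limUnder (𝒰 : Filter ℕ) x

/-!
Suppose `A` and `B` are disjoint with `A(n) - B(n) = o(n)`. Throwing every other element of the
complement of `A ∪ B` into a set `E` makes both `A ∪ E` and `B ∪ E` of density `1/2`, so a finitely
additive `μ` with a single value on the sets of density `1/2` satisfies `μ A + μ E = μ B + μ E`.
Removing `A ∩ B` reduces arbitrary `A` and `B` to this case. Finally, an injective map carries at
most as many points into `[1, n]` as it carries out of it, and for a Lévy permutation the latter
number is `o(n)`.
-/

section

open Asymptotics

theorem finite_inter_Icc (A : Set ℕ) (n : ℕ) : (A ∩ Set.Icc 1 n).Finite :=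
  (Set.finite_Icc 1 n).inter_of_right A

theorem count_zero (A : Set ℕ) : count A 0 = 0 := by
  simp [count]

theorem count_union {A B : Set ℕ} (h : Disjoint A B) (n : ℕ) :
    count (A ∪ B) n = count A n + count B n := by
  simp only [count, Set.union_inter_distrib_right]
  exact_mod_cast Set.ncard_union_eq (h.mono Set.inter_subset_left Set.inter_subset_left)
    (finite_inter_Icc A n) (finite_inter_Icc B n)

theorem count_univ (n : ℕ) : count Set.univ n = n := by
  simp [count, Set.ncard_eq_toFinset_card']

theorem count_add_count_compl (A : Set ℕ) (n : ℕ) : count A n + count Aᶜ n = n := by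
  rw [← count_union disjoint_compl_right, Set.union_compl_self, count_univ]

theorem hasDensity_iff_isLittleO {A : Set ℕ} {a : ℝ} :
    HasDensity A a ↔ (fun n : ℕ => count A n - a * n) =o[atTop] (fun n : ℕ => (n : ℝ)) := by
  have hzero : ∀ n : ℕ, (n : ℝ) = 0 → count A n - a * n = 0 := fun n hn => by
    simp [Nat.cast_eq_zero.mp hn, count_zero]
  rw [isLittleO_iff_tendsto hzero, HasDensity, ← tendsto_sub_nhds_zero_iff]
  refine tendsto_congr' ?_
  filter_upwards [eventually_ne_atTop 0] with n hn
  field_simp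

/-- The sets `A` and `B` have asymptotically equal counting functions: `A(n) - B(n) = o(n)`.
Neither set is required to have an asymptotic density. -/
def CountEquiv (A B : Set ℕ) : Prop :=
  (fun n => count A n - count B n) =o[atTop] (fun n : ℕ => (n : ℝ))

namespace CountEquiv

variable {A B : Set ℕ}

theorem symm (h : CountEquiv A B) : CountEquiv B A :=
  IsLittleO.symm h

theorem sdiff (h : CountEquiv A B) : CountEquiv (A \ B) (B \ A) := by
  refine IsLittleO.congr_left h fun n => ?_
  have hA := count_union (Set.disjoint_sdiff_inter (s := A) (t := B)) n
  have hB := count_union (Set.disjoint_sdiff_inter (s := B) (t := A)) n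
  rw [Set.sdiff_union_inter] at hA hB
  rw [hA, hB, Set.inter_comm B A, add_sub_add_right_eq_sub]

end CountEquiv

theorem ncard_inter_Icc_succ (A : Set ℕ) (n : ℕ) [Decidable (n + 1 ∈ A)] :
    (A ∩ Set.Icc 1 (n + 1)).ncard = (A ∩ Set.Icc 1 n).ncard + if n + 1 ∈ A then 1 else 0 := by
  rw [← Set.insert_Icc_right_eq_Icc_add_one (by omega)]
  split_ifs with h
  · rw [Set.inter_insert_of_mem h, Set.ncard_insert_of_notMem (by simp) (finite_inter_Icc A n)]
  · rw [Set.inter_insert_of_notMem h, add_zero]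

theorem exists_subset_ncard_inter_Icc_eq_half (D : Set ℕ) :
    ∃ E ⊆ D, ∀ n, (E ∩ Set.Icc 1 n).ncard = ((D ∩ Set.Icc 1 n).ncard + 1) / 2 := by
  classical
  refine ⟨{d ∈ D | Odd (D ∩ Set.Icc 1 d).ncard}, Set.sep_subset _ _, fun n => ?_⟩
  induction n with
  | zero => simp
  | succ n ih =>
    rw [ncard_inter_Icc_succ, ih]
    simp only [Set.mem_ofPred_eq, ncard_inter_Icc_succ, Nat.odd_iff]
    by_cases h : n + 1 ∈ D
    · simp only [h, true_and, if_true]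
      split_ifs <;> omega
    · simp only [h, false_and, if_false, add_zero]

theorem exists_subset_abs_count_sub_half_le (D : Set ℕ) :
    ∃ E ⊆ D, ∀ n, |count E n - count D n / 2| ≤ 1 / 2 := by
  obtain ⟨E, hED, hE⟩ := exists_subset_ncard_inter_Icc_eq_half D
  refine ⟨E, hED, fun n => ?_⟩
  have hlower : count D n ≤ 2 * count E n := by
    unfold count
    exact_mod_cast (by grind : (D ∩ Set.Icc 1 n).ncard ≤ 2 * (E ∩ Set.Icc 1 n).ncard)
  have hupper : 2 * count E n ≤ count D n + 1 := by
    unfold count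
    exact_mod_cast (by grind : 2 * (E ∩ Set.Icc 1 n).ncard ≤ (D ∩ Set.Icc 1 n).ncard + 1)
  rw [abs_le]
  constructor <;> linarith

theorem CountEquiv.hasDensity_union_half {A B E : Set ℕ} (h : CountEquiv A B)
    (hAB : Disjoint A B) (hAE : Disjoint A E)
    (hE : ∀ n, |count E n - count (A ∪ B)ᶜ n / 2| ≤ 1 / 2) : HasDensity (A ∪ E) (1 / 2) := by
  have hE_isBigO : (fun n => count E n - count (A ∪ B)ᶜ n / 2) =O[atTop] fun _ => (1 : ℝ) :=
    .of_bound (1 / 2) (.of_forall fun n => by simpa using hE n)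
  have hE_isLittleO := hE_isBigO.trans_isLittleO (isLittleO_const_left.2 (.inr
    (tendsto_norm_atTop_atTop.comp (tendsto_natCast_atTop_atTop (R := ℝ)))))
  refine hasDensity_iff_isLittleO.2
    (((IsLittleO.const_mul_left h (1 / 2)).add hE_isLittleO).congr_left fun n => ?_)
  have hn := count_add_count_compl (A ∪ B) n
  rw [count_union hAB] at hn
  rw [count_union hAE, ← hn]
  ring

theorem CountEquiv.exists_hasDensity_union_half {A B : Set ℕ} (h : CountEquiv A B)
    (hAB : Disjoint A B) :
    ∃ E, Disjoint A E ∧ Disjoint B E ∧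
      HasDensity (A ∪ E) (1 / 2) ∧ HasDensity (B ∪ E) (1 / 2) := by
  obtain ⟨E, hEsub, hE⟩ := exists_subset_abs_count_sub_half_le (A ∪ B)ᶜ
  have hdisj : Disjoint (A ∪ B) E := (Set.disjoint_left.2 fun _ hx => hEsub hx).symm
  obtain ⟨hAE, hBE⟩ := Set.disjoint_union_left.1 hdisj
  exact ⟨E, hAE, hBE, h.hasDensity_union_half hAB hAE hE,
    h.symm.hasDensity_union_half hAB.symm hBE (by rwa [Set.union_comm])⟩

section Additive

variable {M : Type*} [Add M] [IsRightCancelAdd M] {μ : Set ℕ → M} {A B : Set ℕ}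

theorem CountEquiv.apply_eq_of_disjoint
    (hadd : ∀ S T : Set ℕ, Disjoint S T → μ (S ∪ T) = μ S + μ T)
    (hhalf : ∀ S T : Set ℕ, HasDensity S (1 / 2) → HasDensity T (1 / 2) → μ S = μ T)
    (h : CountEquiv A B) (hAB : Disjoint A B) : μ A = μ B := by
  obtain ⟨E, hAE, hBE, hA, hB⟩ := h.exists_hasDensity_union_half hAB
  refine add_right_cancel (b := μ E) ?_
  rw [← hadd A E hAE, ← hadd B E hBE, hhalf _ _ hA hB]

theorem CountEquiv.apply_eq
    (hadd : ∀ S T : Set ℕ, Disjoint S T → μ (S ∪ T) = μ S + μ T)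
    (hhalf : ∀ S T : Set ℕ, HasDensity S (1 / 2) → HasDensity T (1 / 2) → μ S = μ T)
    (h : CountEquiv A B) : μ A = μ B :=
  calc
    μ A = μ (A \ B) + μ (A ∩ B) := by
      rw [← hadd _ _ Set.disjoint_sdiff_inter, Set.sdiff_union_inter]
    _ = μ (B \ A) + μ (B ∩ A) := by
      rw [h.sdiff.apply_eq_of_disjoint hadd hhalf disjoint_sdiff_sdiff, Set.inter_comm]
    _ = μ B := by rw [← hadd _ _ Set.disjoint_sdiff_inter, Set.sdiff_union_inter]

end Additive

section Injective

variable {α : Type*} {f : α → α} {s t : Set α}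

theorem ncard_preimage_sdiff_le (hf : f.Injective) (hs : s.Finite) :
    (f ⁻¹' s \ s).ncard ≤ (s \ f ⁻¹' s).ncard := by
  have hpre : (f ⁻¹' s).Finite := hs.preimage hf.injOn
  refine (Set.ncard_le_ncard_iff_ncard_sdiff_le_ncard_sdiff hpre hs).1 ?_
  exact Set.ncard_le_ncard_of_injOn f (fun _ hx => hx) hf.injOn hs

theorem ncard_inter_le_add_ncard_sdiff (A : Set α) (hs : s.Finite) (ht : t.Finite) :
    (A ∩ s).ncard ≤ (A ∩ t).ncard + (s \ t).ncard := by
  have hsub : A ∩ s ⊆ A ∩ t ∪ s \ t := fun x ⟨hxA, hxs⟩ =>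
    (em (x ∈ t)).imp (⟨hxA, ·⟩) (⟨hxs, ·⟩)
  exact (Set.ncard_le_ncard hsub ((ht.inter_of_right A).union hs.sdiff)).trans
    (Set.ncard_union_le _ _)

theorem abs_ncard_image_inter_sub_le (hf : f.Injective) (hs : s.Finite) (A : Set α) :
    |((f '' A ∩ s).ncard : ℝ) - (A ∩ s).ncard| ≤ (s \ f ⁻¹' s).ncard := by
  have hpre : (f ⁻¹' s).Finite := hs.preimage hf.injOn
  rw [← Set.image_inter_preimage, Set.ncard_image_of_injective _ hf, abs_sub_le_iff,
    sub_le_iff_le_add', sub_le_iff_le_add']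
  constructor
  · exact_mod_cast (ncard_inter_le_add_ncard_sdiff A hpre hs).trans
      (Nat.add_le_add_left (ncard_preimage_sdiff_le hf hs) _)
  · exact_mod_cast ncard_inter_le_add_ncard_sdiff A hs hpre

end Injective

theorem abs_count_image_sub_count_le {f : ℕ → ℕ} (hf : f.Injective) (A : Set ℕ) (n : ℕ) :
    |count (f '' A) n - count A n| ≤ {k | k ≤ n ∧ n < f k}.ncard + 1 := by
  refine (abs_ncard_image_inter_sub_le hf (Set.finite_Icc 1 n) A).trans ?_
  -- A point of `[1, n]` can leave `[1, n]` downwards only by landing on `0`.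
  have hsub : Set.Icc 1 n \ f ⁻¹' Set.Icc 1 n ⊆ {k | k ≤ n ∧ n < f k} ∪ f ⁻¹' {0} := by
    intro k
    simp only [Set.mem_sdiff, Set.mem_Icc, Set.mem_preimage, Set.mem_union, Set.mem_ofPred_eq,
      Set.mem_singleton_iff]
    omega
  have hup : {k | k ≤ n ∧ n < f k}.Finite := (Set.finite_Iic n).subset fun _ hk => hk.1
  have hzero : (f ⁻¹' {0}).Subsingleton := Set.subsingleton_singleton.preimage hf
  have hle := (Set.ncard_le_ncard hsub (hup.union hzero.finite)).trans (Set.ncard_union_le _ _)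
  have hone : (f ⁻¹' {0}).ncard ≤ 1 :=
    (Set.ncard_le_one hzero.finite).2 fun _ ha _ hb => hzero ha hb
  exact_mod_cast hle.trans (Nat.add_le_add_left hone _)

theorem countEquiv_image {f : ℕ → ℕ} (hf : f.Injective)
    (hlevy : Tendsto (fun n : ℕ => ({k | k ≤ n ∧ n < f k}.ncard : ℝ) / n) atTop (𝓝 0))
    (A : Set ℕ) : CountEquiv (f '' A) A := by
  have hbound : Tendsto (fun n : ℕ => (({k | k ≤ n ∧ n < f k}.ncard : ℝ) + 1) / n) atTop (𝓝 0) := by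
    simpa only [add_div, add_zero] using hlevy.add tendsto_one_div_atTop_nhds_zero_nat
  refine (isLittleO_iff_tendsto fun n hn => ?_).2 (squeeze_zero_norm (fun n => ?_) hbound)
  · simp [Nat.cast_eq_zero.mp hn, count_zero]
  · rw [norm_div, Real.norm_eq_abs, Real.norm_natCast]
    gcongr
    exact abs_count_image_sub_count_le hf A n

end

theorem densityMeasure_levyGroup_invariant_general {M : Type*} [Add M] [IsRightCancelAdd M]
    {f : ℕ → ℕ} (hf : f.Injective)
    (hlevy : Tendsto (fun n : ℕ => ({k | k ≤ n ∧ n < f k}.ncard : ℝ) / n) atTop (𝓝 0))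
    {μ : Set ℕ → M} (hadd : ∀ S T : Set ℕ, Disjoint S T → μ (S ∪ T) = μ S + μ T)
    (hhalf : ∀ S T : Set ℕ, HasDensity S (1 / 2) → HasDensity T (1 / 2) → μ S = μ T)
    (A : Set ℕ) : μ (f '' A) = μ A :=
  (countEquiv_image hf hlevy A).apply_eq hadd hhalf

/-- If `π` belongs to the Lévy group and `μ` is a density measure, then
`μ(πA) = μ(A)` for every `A ⊆ ℕ`. -/
theorem densityMeasure_levyGroup_invariant
    (π : Equiv.Perm ℕ) (hπ : InLevyGroup π)
    (μ : Set ℕ → ℝ) (hμ : IsDensityMeasure μ) (A : Set ℕ) :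
    μ (π '' A) = μ A :=
  densityMeasure_levyGroup_invariant_general π.injective hπ hμ.1.2.2.2
    (fun S T hS hT => (hμ.2 S _ hS).trans (hμ.2 T _ hT).symm) A
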